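/- arXiv:2004.07794 — 3 statements merged into one kernel-verified Lean document; each statement's English description precedes it below -/
import Mathlib

section
/- Let d ≥ 1, let μ(v) = (2π)^{−d/2}·e^{−|v|²/2} on ℝ^d, set ψ₀ = μ^{1/2}, ψ_i(v) = v_i·μ^{1/2}(v) for 1 ≤ i ≤ d, ψ_{d+1}(v) = (1/√(2d))·(|v|² − d)·μ^{1/2}(v), and let P₀ : L²(ℝ^d) → L²(ℝ^d) be the map P₀f = Σ_{i=0}^{d+1} (f, ψ_i)_{L²}·ψ_i. Define ψ_{0,0} = √(d/(2(d+2)))·ψ₀ + (1/√2)·ψ₁ + √(1/(d+2))·ψ_{d+1}, ψ_{0,d+1} = √(d/(2(d+2)))·ψ₀ − (1/√2)·ψ₁ + √(1/(d+2))·ψ_{d+1}, ψ_{0,1} = −√(2/(d+2))·ψ₀ + √(d/(d+2))·ψ_{d+1}, and ψ_{0,j} = ψ_j for j = 2, …, d. Then P₀(v₁·ψ_{0,0}) = √((d+2)/d)·ψ_{0,0}, P₀(v₁·ψ_{0,d+1}) = −√((d+2)/d)·ψ_{0,d+1}, and P₀(v₁·ψ_{0,j}) = 0 for j = 1, 2,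 …, d; moreover {ψ_{0,j}}_{j=0}^{d+1} is an orthonormal family in L²(ℝ^d). -/
open MeasureTheory

/-!
Each `ψᵢ` and each `ψ_{0,j}` is a polynomial times `√μ`, so every inner product in the claim is a
Gaussian moment of a polynomial. Gaussian integration by parts, `𝔼[vᵢ P] = 𝔼[∂ᵢ P]`
(`moment_X_mul`), together with `𝔼[1] = 1` (`moment_one`) determines these moments. With
`q = |v|² - d` it gives

* `𝔼[vᵢ vⱼ] = δᵢⱼ`, `𝔼[q²] = 2d` and `𝔼[q] = 𝔼[vᵢ q] = 0`, so the `ψᵢ` are orthonormal;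
* `𝔼[vᵢ vⱼ vₖ] = 𝔼[vᵢ q²] = 0` and `𝔼[vᵢ vⱼ q] = 2 δᵢⱼ`, so multiplication by `v₁` followed by `P₀`
  annihilates `ψ₂, …, ψ_d` and acts on the span of `ψ₀, ψ₁, ψ_{d+1}` by
  `(a, b, c) ↦ (b, a + √(2/d) c, √(2/d) b)`.

The vectors `ψ_{0,0}, ψ_{0,1}, ψ_{0,d+1}` are the unit eigenvectors of this symmetric `3 × 3` matrix,
for the eigenvalues `√((d+2)/d)`, `0` and `-√((d+2)/d)`.
-/

open MvPolynomial in
/-- The function on `EuclideanSpace ℝ (Fin d)` given by evaluating a polynomial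
at the coordinates. -/
noncomputable def polyFun {d : ℕ} (P : MvPolynomial (Fin d) ℝ) (v : EuclideanSpace ℝ (Fin d)) : ℝ :=
  eval (fun i => v i) P

/-- The density of the standard Gaussian measure (the normalized Maxwellian). -/
noncomputable def maxwellian (d : ℕ) (v : EuclideanSpace ℝ (Fin d)) : ℝ :=
  (2 * Real.pi) ^ (-(d : ℝ) / 2) * Real.exp (-‖v‖ ^ 2 / 2)

theorem maxwellian_nonneg {d : ℕ} (v : EuclideanSpace ℝ (Fin d)) : 0 ≤ maxwellian d v := by
  unfold maxwellian; positivity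

theorem integrable_polyFun_mul_maxwellian {d : ℕ} (P : MvPolynomial (Fin d) ℝ) :
    Integrable (fun v => polyFun P v * maxwellian d v) := by
  induction P using MvPolynomial.induction_on' with
  | add p q hp hq =>
    convert! hp.add hq using 2 with v
    simp [polyFun, add_mul]
  | monomial s a =>
    have h1 : ∀ n : ℕ, Integrable (fun x : ℝ => x ^ n * Real.exp (-(1 / 2) * x ^ 2)) := by
      intro n
      have := integrable_rpow_mul_exp_neg_mul_sq (b := 1 / 2) (by norm_num) (s := n)
        (by have : (0 : ℝ) ≤ n := n.cast_nonneg
            linarith)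
      simpa only [Real.rpow_natCast] using this
    have h2 := Integrable.fintype_prod (ι := Fin d) (μ := fun _ => (volume : Measure ℝ))
      (fun i => h1 (s i))
    have h3 := ((EuclideanSpace.volume_preserving_symm_measurableEquiv_toLp
      (Fin d)).integrable_comp_emb (MeasurableEquiv.measurableEmbedding _)).mpr h2
    refine (h3.const_mul (a * (2 * Real.pi) ^ (-(d : ℝ) / 2))).congr (.of_forall fun v => ?_)
    have h4 : Real.exp (-‖v‖ ^ 2 / 2) = ∏ i, Real.exp (-(1 / 2) * v i ^ 2) := by
      rw [← Real.exp_sum, EuclideanSpace.real_norm_sq_eq, ← Finset.mul_sum]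
      congr 1
      ring
    simp only [polyFun, maxwellian, h4, MvPolynomial.eval_monomial, Function.comp_def,
      Finset.prod_mul_distrib, MeasurableEquiv.toLp_symm_apply,
      Finsupp.prod_fintype _ _ (fun i => pow_zero (v.ofLp i))]
    ring

theorem hasFDerivAt_maxwellian {d : ℕ} (v : EuclideanSpace ℝ (Fin d)) :
    HasFDerivAt (maxwellian d) (-maxwellian d v • innerSL ℝ v) v := by
  have h := (((hasFDerivAt_id v).norm_sq.const_mul (-1 / 2)).exp).const_mul
    ((2 * Real.pi) ^ (-(d : ℝ) / 2))
  convert! h using 1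
  · funext w
    simp only [maxwellian, id]
    congr 2
    ring
  · ext w
    simp [maxwellian]
    ring_nf

open MvPolynomial in
theorem differentiableAt_polyFun {d : ℕ} (P : MvPolynomial (Fin d) ℝ) (v : EuclideanSpace ℝ (Fin d)) :
    DifferentiableAt ℝ (polyFun P) v ∧
      ∀ i, fderiv ℝ (polyFun P) v (EuclideanSpace.single i 1) = polyFun (pderiv i P) v := by
  induction P using MvPolynomial.induction_on with
  | C a =>
    have h : polyFun (C a : MvPolynomial (Fin d) ℝ) = fun _ => a := by
      funext w; simp [polyFun]
    rw [h]
    simp [polyFun]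
  | add p q hp hq =>
    have h : polyFun (p + q) = polyFun p + polyFun q := by
      funext w; simp [polyFun]
    rw [h]
    refine ⟨hp.1.add hq.1, fun i => ?_⟩
    rw [fderiv_add hp.1 hq.1, _root_.map_add]
    simp [hp.2, hq.2, polyFun]
  | mul_X p j hp =>
    have h : polyFun (p * X j) = polyFun p *
        ⇑(EuclideanSpace.proj j : EuclideanSpace ℝ (Fin d) →L[ℝ] ℝ) := by
      funext w; simp [polyFun]
    rw [h]
    have hj : DifferentiableAt ℝ (EuclideanSpace.proj j : EuclideanSpace ℝ (Fin d) →L[ℝ] ℝ) v :=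
      ContinuousLinearMap.differentiableAt _
    refine ⟨hp.1.mul hj, fun i => ?_⟩
    rw [fderiv_mul hp.1 hj, ContinuousLinearMap.fderiv]
    simp only [add_apply, smul_apply, hp.2, smul_eq_mul, PiLp.proj_apply, pderiv_mul, pderiv_X,
      PiLp.single_apply]
    by_cases hij : j = i
    · subst hij
      simp [polyFun]
      ring
    · simp [polyFun, hij]
      ring

/-- Expectation of a polynomial under the standard Gaussian measure. -/
noncomputable def moment (d : ℕ) : MvPolynomial (Fin d) ℝ →ₗ[ℝ] ℝ where
  toFun P := ∫ v, polyFun P v * maxwellian d v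
  map_add' P Q := by
    rw [← integral_add (integrable_polyFun_mul_maxwellian P) (integrable_polyFun_mul_maxwellian Q)]
    simp [polyFun, add_mul]
  map_smul' a P := by
    rw [RingHom.id_apply, smul_eq_mul, ← integral_const_mul]
    simp [polyFun, mul_assoc]

theorem moment_one (d : ℕ) : moment d 1 = 1 := by
  have h := GaussianFourier.integral_rexp_neg_mul_sq_norm (V := EuclideanSpace ℝ (Fin d))
    (b := 1 / 2) (by norm_num)
  have hpi : 0 < 2 * Real.pi := by positivity
  have h' : ∀ v : EuclideanSpace ℝ (Fin d), polyFun 1 v * maxwellian d v =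
      (2 * Real.pi) ^ (-(d : ℝ) / 2) * Real.exp (-(1 / 2) * ‖v‖ ^ 2) := by
    intro v
    simp only [polyFun, maxwellian, map_one, one_mul]
    congr 2
    ring
  change ∫ v, polyFun 1 v * maxwellian d v = 1
  simp_rw [h']
  rw [integral_const_mul, h, finrank_euclideanSpace_fin,
    show Real.pi / (1 / 2) = 2 * Real.pi by ring, ← Real.rpow_add hpi]
  rw [show -(d : ℝ) / 2 + d / 2 = 0 by ring, Real.rpow_zero]

open MvPolynomial in
/-- Gaussian integration by parts (Stein's identity): `𝔼[vᵢ P] = 𝔼[∂ᵢ P]`. -/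
theorem moment_X_mul {d : ℕ} (i : Fin d) (P : MvPolynomial (Fin d) ℝ) :
    moment d (X i * P) = moment d (pderiv i P) := by
  have hg : ∀ v, fderiv ℝ (maxwellian d) v (EuclideanSpace.single i 1) =
      -(v i * maxwellian d v) := by
    intro v
    rw [(hasFDerivAt_maxwellian v).fderiv]
    simp [EuclideanSpace.inner_single_right, mul_comm]
  have hX : ∀ v, polyFun P v * -(v i * maxwellian d v) =
      -(polyFun (X i * P) v * maxwellian d v) := by
    intro v
    simp [polyFun]
    ring
  have h := integral_mul_fderiv_eq_neg_fderiv_mul_of_integrable (μ := volume)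
    (f := polyFun P) (g := maxwellian d) (v := EuclideanSpace.single i 1)
    (by simpa only [(differentiableAt_polyFun P _).2] using integrable_polyFun_mul_maxwellian _)
    (by simp only [hg, hX]; exact (integrable_polyFun_mul_maxwellian (X i * P)).neg)
    (integrable_polyFun_mul_maxwellian P)
    (fun v _ => (differentiableAt_polyFun P v).1)
    (fun v _ => (hasFDerivAt_maxwellian v).differentiableAt)
  simp only [hg, hX, (differentiableAt_polyFun P _).2, integral_neg, neg_inj] at h
  exact h

open MvPolynomial in
/-- The unnormalized energy mode `|v|² - d`. -/
noncomputable def energyPoly (d : ℕ) : MvPolynomial (Fin d) ℝ := ∑ k, X k * X k - C (d : ℝ)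

open MvPolynomial in
theorem pderiv_energyPoly {d : ℕ} (i : Fin d) : pderiv i (energyPoly d) = (2 : ℝ) • X i := by
  simp only [energyPoly, map_sub, map_sum, pderiv_mul, pderiv_X, pderiv_C, Pi.single_apply]
  simp [Finset.sum_add_distrib, two_smul]

open MvPolynomial in
theorem moment_X {d : ℕ} (i : Fin d) : moment d (X i) = 0 := by
  rw [← mul_one (X i), moment_X_mul]; simp

open MvPolynomial in
theorem moment_X_mul_X {d : ℕ} (i j : Fin d) :
    moment d (X i * X j) = if i = j then 1 else 0 := by
  rw [moment_X_mul, pderiv_X, Pi.single_apply]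
  by_cases h : i = j <;> simp [h, moment_one, eq_comm]

theorem moment_energyPoly_mul {d : ℕ} (P : MvPolynomial (Fin d) ℝ) :
    moment d (energyPoly d * P) = ∑ k, moment d (MvPolynomial.X k * MvPolynomial.pderiv k P) := by
  simp only [energyPoly, sub_mul, Finset.sum_mul, map_sub, map_sum, mul_assoc, moment_X_mul,
    MvPolynomial.pderiv_mul, MvPolynomial.pderiv_X_self, one_mul, map_add,
    Finset.sum_add_distrib, ← MvPolynomial.smul_eq_C_mul, map_smul]
  simp

open MvPolynomial in
theorem moment_energyPoly {d : ℕ} : moment d (energyPoly d) = 0 := by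
  rw [← mul_one (energyPoly d), moment_energyPoly_mul]; simp

open MvPolynomial in
theorem moment_X_mul_energyPoly {d : ℕ} (i : Fin d) : moment d (X i * energyPoly d) = 0 := by
  rw [moment_X_mul, pderiv_energyPoly, map_smul, moment_X, smul_zero]

open MvPolynomial in
theorem moment_energyPoly_sq {d : ℕ} : moment d (energyPoly d * energyPoly d) = 2 * d := by
  rw [moment_energyPoly_mul]
  simp [pderiv_energyPoly, moment_X_mul_X, mul_comm]

open MvPolynomial in
theorem moment_X_mul_X_mul_X {d : ℕ} (i j k : Fin d) : moment d (X i * (X j * X k)) = 0 := by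
  rw [moment_X_mul, pderiv_mul, pderiv_X, pderiv_X, Pi.single_apply, Pi.single_apply]
  split_ifs <;> simp [moment_X]

open MvPolynomial in
theorem moment_X_mul_X_mul_energyPoly {d : ℕ} (i j : Fin d) :
    moment d (X i * (X j * energyPoly d)) = if i = j then 2 else 0 := by
  rw [moment_X_mul, pderiv_mul, pderiv_X, pderiv_energyPoly, Pi.single_apply]
  by_cases h : i = j
  · simp [h, moment_energyPoly, moment_X_mul_X]
  · simp [h, Ne.symm h, moment_X_mul_X]

open MvPolynomial in
theorem moment_X_mul_energyPoly_sq {d : ℕ} (i : Fin d) :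
    moment d (X i * (energyPoly d * energyPoly d)) = 0 := by
  rw [moment_X_mul, pderiv_mul, pderiv_energyPoly]
  simp [moment_X_mul_energyPoly, mul_comm (energyPoly d)]

open MvPolynomial in
/-- The polynomial `a + b vₒ + c (|v|² - d)` mixing the mass, `o`-th momentum and energy modes. -/
noncomputable def combo {d : ℕ} (o : Fin d) (a b c : ℝ) : MvPolynomial (Fin d) ℝ :=
  a • 1 + b • X o + c • energyPoly d

open MvPolynomial in
theorem moment_combo_mul {d : ℕ} (o : Fin d) (a b c : ℝ) (P : MvPolynomial (Fin d) ℝ) :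
    moment d (combo o a b c * P) =
      a * moment d P + b * moment d (X o * P) + c * moment d (energyPoly d * P) := by
  simp [combo, add_mul]

open MvPolynomial in
theorem moment_X_mul_combo_mul {d : ℕ} (o : Fin d) (a b c : ℝ) (P : MvPolynomial (Fin d) ℝ) :
    moment d (X o * combo o a b c * P) = a * moment d (X o * P) +
      b * moment d (X o * (X o * P)) + c * moment d (X o * (energyPoly d * P)) := by
  simp [combo, add_mul, mul_add, mul_assoc]

open MvPolynomial in
theorem moment_combo_mul_X {d : ℕ} (o k : Fin d) (a b c : ℝ) :
    moment d (combo o a b c * X k) = if o = k then b else 0 := by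
  rw [moment_combo_mul, moment_X, moment_X_mul_X, mul_comm (energyPoly d), moment_X_mul_energyPoly]
  simp

theorem moment_combo_mul_combo {d : ℕ} (o : Fin d) (a b c a' b' c' : ℝ) :
    moment d (combo o a b c * combo o a' b' c') = a * a' + b * b' + 2 * d * (c * c') := by
  rw [moment_combo_mul, mul_comm (MvPolynomial.X o), moment_combo_mul_X,
    mul_comm (energyPoly d), moment_combo_mul, moment_energyPoly, moment_X_mul_energyPoly,
    moment_energyPoly_sq, ← mul_one (combo o a' b' c'), moment_combo_mul, mul_one, moment_one,
    mul_one, moment_X, mul_one, moment_energyPoly]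
  simp
  ring

/-- The integral of a product of two polynomials, each times the square root of the Maxwellian,
is the Gaussian moment of the product. -/
theorem integral_polyFun_sqrt {d : ℕ} (P Q : MvPolynomial (Fin d) ℝ) :
    ∫ v, (polyFun P v * √(maxwellian d v)) * (polyFun Q v * √(maxwellian d v)) =
      moment d (P * Q) := by
  change _ = ∫ v, polyFun (P * Q) v * maxwellian d v
  congr 1
  funext v
  have h := Real.mul_self_sqrt (maxwellian_nonneg v)
  rw [show polyFun (P * Q) v = polyFun P v * polyFun Q v by simp [polyFun], ← h]
  ring_nf
  simp [Real.sq_sqrt (maxwellian_nonneg v)]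

open MeasureTheory

/-- With `P₀f = Σᵢ (f, ψᵢ)_{L²} ψᵢ` the projection onto the kernel of
the linearized Boltzmann operator, the functions `ψ_{0,j}` are eigenfunctions of
`f ↦ P₀(v₁ f)` on the kernel with eigenvalues `√((d+2)/d)`, `−√((d+2)/d)` and `0`,
and they form an orthonormal family in `L²(ℝ^d)`. -/
theorem stmt_12 (d : ℕ) (hd : 1 ≤ d)
    (μ : EuclideanSpace ℝ (Fin d) → ℝ)
    (hμ : ∀ v, μ v = (2 * Real.pi) ^ (-(d : ℝ) / 2) * Real.exp (-‖v‖ ^ 2 / 2))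
    (ψ : Fin (d + 2) → EuclideanSpace ℝ (Fin d) → ℝ)
    (hψ0 : ∀ v, ψ 0 v = Real.sqrt (μ v))
    (hψmid : ∀ (k : Fin d) (v : EuclideanSpace ℝ (Fin d)),
      ψ (Fin.succ (Fin.castSucc k)) v = v k * Real.sqrt (μ v))
    (hψlast : ∀ v, ψ (Fin.last (d + 1)) v =
      1 / Real.sqrt (2 * d) * (‖v‖ ^ 2 - d) * Real.sqrt (μ v))
    (P0 : (EuclideanSpace ℝ (Fin d) → ℝ) → EuclideanSpace ℝ (Fin d) → ℝ)
    (hP0 : ∀ g v, P0 g v = ∑ i : Fin (d + 2), (∫ w, g w * ψ i w) * ψ i v)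
    (φ : Fin (d + 2) → EuclideanSpace ℝ (Fin d) → ℝ)
    (hφ0 : ∀ v, φ 0 v = Real.sqrt (d / (2 * (d + 2))) * ψ 0 v
      + 1 / Real.sqrt 2 * ψ 1 v + Real.sqrt (1 / (d + 2)) * ψ (Fin.last (d + 1)) v)
    (hφlast : ∀ v, φ (Fin.last (d + 1)) v = Real.sqrt (d / (2 * (d + 2))) * ψ 0 v
      - 1 / Real.sqrt 2 * ψ 1 v + Real.sqrt (1 / (d + 2)) * ψ (Fin.last (d + 1)) v)
    (hφ1 : ∀ v, φ 1 v = -Real.sqrt (2 / (d + 2)) * ψ 0 v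
      + Real.sqrt (d / (d + 2)) * ψ (Fin.last (d + 1)) v)
    (hφj : ∀ j : Fin (d + 2), 2 ≤ (j : ℕ) → (j : ℕ) ≤ d → φ j = ψ j) :
    (P0 (fun v => v ⟨0, by omega⟩ * φ 0 v) =
      fun v => Real.sqrt (((d : ℝ) + 2) / d) * φ 0 v) ∧
    (P0 (fun v => v ⟨0, by omega⟩ * φ (Fin.last (d + 1)) v) =
      fun v => -Real.sqrt (((d : ℝ) + 2) / d) * φ (Fin.last (d + 1)) v) ∧
    (∀ j : Fin (d + 2), 1 ≤ (j : ℕ) → (j : ℕ) ≤ d →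
      P0 (fun v => v ⟨0, by omega⟩ * φ j v) = 0) ∧
    (∀ i j : Fin (d + 2), (∫ v, φ i v * φ j v) = if i = j then 1 else 0) := by
  obtain rfl : μ = maxwellian d := funext hμ
  generalize ho : (⟨0, by omega⟩ : Fin d) = o
  have hdpos : (0 : ℝ) < d := by exact_mod_cast hd
  -- All constants are expressed through `s = √2`, `D = √d` and `E = √(d + 2)`.
  obtain ⟨s, hs⟩ : ∃ s, s = √(2 : ℝ) := ⟨_, rfl⟩
  obtain ⟨D, hD⟩ : ∃ D, D = √(d : ℝ) := ⟨_, rfl⟩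
  obtain ⟨E, hE⟩ : ∃ E, E = √((d : ℝ) + 2) := ⟨_, rfl⟩
  have hs0 : 0 < s := by rw [hs]; positivity
  have hD0 : 0 < D := by rw [hD]; positivity
  have hE0 : 0 < E := by rw [hE]; positivity
  have hs2 : s ^ 2 = 2 := by rw [hs]; exact Real.sq_sqrt (by norm_num)
  have hD2 : D ^ 2 = d := by rw [hD]; exact Real.sq_sqrt hdpos.le
  have hE2 : E ^ 2 = D ^ 2 + 2 := by rw [hD2, hE]; exact Real.sq_sqrt (by positivity)
  have e1 : √((d : ℝ) / (2 * (d + 2))) = D / (s * E) := by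
    rw [Real.sqrt_div hdpos.le, Real.sqrt_mul (by norm_num), hs, hD, hE]
  have e2 : √(1 / ((d : ℝ) + 2)) = 1 / E := by
    rw [Real.sqrt_div (by norm_num), Real.sqrt_one, hE]
  have e3 : √(2 / ((d : ℝ) + 2)) = s / E := by
    rw [Real.sqrt_div (by norm_num), hs, hE]
  have e4 : √((d : ℝ) / (d + 2)) = D / E := by
    rw [Real.sqrt_div hdpos.le, hD, hE]
  have e5 : √(((d : ℝ) + 2) / d) = E / D := by
    rw [Real.sqrt_div (by positivity), hD, hE]
  have e6 : √(2 * (d : ℝ)) = s * D := by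
    rw [Real.sqrt_mul (by norm_num), hs, hD]
  rw [e6] at hψlast
  rw [e1, e2, ← hs] at hφ0 hφlast
  rw [e3, e4] at hφ1
  rw [e5]
  have h1 : (1 : Fin (d + 2)) = Fin.succ (Fin.castSucc o) := by
    rw [← ho]; ext; simp
  have p0 : ∀ v, polyFun (1 : MvPolynomial (Fin d) ℝ) v = 1 := fun v => by simp [polyFun]
  have pX : ∀ (k : Fin d) v, polyFun (MvPolynomial.X k) v = v k := fun k v => by simp [polyFun]
  have pq : ∀ v, polyFun (energyPoly d) v = ‖v‖ ^ 2 - d := fun v => by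
    rw [EuclideanSpace.real_norm_sq_eq]
    simp [polyFun, energyPoly, sq]
  have pmul : ∀ (P Q : MvPolynomial (Fin d) ℝ) v, polyFun (P * Q) v = polyFun P v * polyFun Q v :=
    fun P Q v => by simp [polyFun]
  have pc : ∀ a b c v, polyFun (combo o a b c) v = a + b * v o + c * (‖v‖ ^ 2 - d) :=
    fun a b c v => by
      rw [← pq]; simp [polyFun, combo]
  -- The projection of `P √μ`, in terms of Gaussian moments of `P`.
  have hproj : ∀ (g : EuclideanSpace ℝ (Fin d) → ℝ) (P : MvPolynomial (Fin d) ℝ),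
      (∀ v, g v = polyFun P v * √(maxwellian d v)) → ∀ v, P0 g v = moment d (P * 1) * ψ 0 v +
        (∑ k : Fin d, moment d (P * MvPolynomial.X k) * ψ (Fin.succ (Fin.castSucc k)) v) +
        1 / (s * D) * moment d (P * energyPoly d) * ψ (Fin.last (d + 1)) v := by
    intro g P hg v
    rw [hP0, Fin.sum_univ_succ, Fin.sum_univ_castSucc, ← add_assoc, Fin.succ_last]
    congr 1
    · congr 1
      · rw [← integral_polyFun_sqrt]
        simp only [hg, hψ0, p0, one_mul]
      · refine Finset.sum_congr rfl fun k _ => ?_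
        rw [← integral_polyFun_sqrt]
        simp only [hg, hψmid, pX]
    · rw [← integral_polyFun_sqrt, ← integral_const_mul]
      simp only [hg, hψlast, pq]
      congr 2
      funext w
      ring
  -- The compressed multiplication operator on the span of `ψ₀`, `ψ₁` and `ψ_{d+1}`.
  have hprojc : ∀ (g : EuclideanSpace ℝ (Fin d) → ℝ) (a b c : ℝ),
      (∀ v, g v = polyFun (combo o a b c) v * √(maxwellian d v)) →
      ∀ v, P0 (fun v => v o * g v) v = b * ψ 0 v + (a + 2 * c) * ψ 1 v +
        1 / (s * D) * (2 * b) * ψ (Fin.last (d + 1)) v := by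
    intro g a b c hg v
    rw [hproj _ (MvPolynomial.X o * combo o a b c)
      (fun w => by rw [pmul, pX, hg, mul_assoc])]
    have hm : moment d (MvPolynomial.X o * combo o a b c) = b := by
      rw [mul_comm, moment_combo_mul_X, if_pos rfl]
    simp only [hm, moment_X_mul_combo_mul, mul_comm (energyPoly d) (MvPolynomial.X _),
      moment_X_mul_X_mul_X, moment_X_mul_X_mul_energyPoly, moment_X_mul_X,
      moment_X_mul_energyPoly, moment_X_mul_energyPoly_sq, mul_one]
    rw [Finset.sum_eq_single o]
    · simp [h1]
      ring
    · intro k _ hk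
      simp [hk.symm]
    · simp
  have f0 : ∀ v, φ 0 v = polyFun (combo o (D / (s * E)) (1 / s) (1 / E * (1 / (s * D)))) v *
      √(maxwellian d v) := by
    intro v; rw [hφ0, h1, hψ0, hψmid, hψlast, pc]; ring
  have fl : ∀ v, φ (Fin.last (d + 1)) v =
      polyFun (combo o (D / (s * E)) (-(1 / s)) (1 / E * (1 / (s * D)))) v *
      √(maxwellian d v) := by
    intro v; rw [hφlast, h1, hψ0, hψmid, hψlast, pc]; ring
  have f1 : ∀ v, φ 1 v = polyFun (combo o (-(s / E)) 0 (D / E * (1 / (s * D)))) v *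
      √(maxwellian d v) := by
    intro v; rw [hφ1, hψ0, hψlast, pc]; ring
  have fj : ∀ k : Fin d, k ≠ o → ∀ v, φ (Fin.succ (Fin.castSucc k)) v =
      polyFun (MvPolynomial.X k) v * √(maxwellian d v) := by
    intro k hk v
    have hk0 : (k : ℕ) ≠ 0 := by
      rintro h; exact hk (by rw [← ho]; ext; exact h)
    rw [hφj _ (by simp; omega) (by simp), hψmid, pX]
  have hcase : ∀ i : Fin (d + 2), i = 0 ∨ i = 1 ∨ i = Fin.last (d + 1) ∨
      ∃ k, k ≠ o ∧ i = Fin.succ (Fin.castSucc k) := by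
    intro i
    induction i using Fin.cases with
    | zero => simp
    | succ i =>
      induction i using Fin.lastCases with
      | last => simp
      | cast k =>
        by_cases hk : k = o
        · rw [hk, h1]; simp
        · exact Or.inr (Or.inr (Or.inr ⟨k, hk, rfl⟩))
  have n0l : (0 : Fin (d + 2)) ≠ Fin.last (d + 1) := by simp [Fin.ext_iff]
  have n1l : (1 : Fin (d + 2)) ≠ Fin.last (d + 1) := by
    simp [Fin.ext_iff]; omega
  have n01 : (0 : Fin (d + 2)) ≠ 1 := by simp
  have n0k : ∀ k : Fin d, (0 : Fin (d + 2)) ≠ Fin.succ (Fin.castSucc k) :=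
    fun k => (Fin.succ_ne_zero _).symm
  have nlk : ∀ k : Fin d, Fin.last (d + 1) ≠ Fin.succ (Fin.castSucc k) := by
    intro k; simp [Fin.ext_iff]; omega
  have n1k : ∀ k : Fin d, k ≠ o → (1 : Fin (d + 2)) ≠ Fin.succ (Fin.castSucc k) := by
    intro k hk; rw [h1]; simpa using hk.symm
  refine ⟨?_, ?_, ?_, ?_⟩
  · funext v
    rw [hprojc _ _ _ _ f0, hφ0]
    have c1 : 1 / s = E / D * (D / (s * E)) := by field_simp
    have c2 : D / (s * E) + 2 * (1 / E * (1 / (s * D))) = E / D * (1 / s) := by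
      field_simp; linarith
    have c3 : 1 / (s * D) * (2 * (1 / s)) = E / D * (1 / E) := by
      field_simp; linarith
    rw [c2, c3]
    linear_combination ψ 0 v * c1
  · funext v
    rw [hprojc _ _ _ _ fl, hφlast]
    have c1 : 1 / s = E / D * (D / (s * E)) := by field_simp
    have c2 : D / (s * E) + 2 * (1 / E * (1 / (s * D))) = E / D * (1 / s) := by
      field_simp; linarith
    have c3 : 1 / (s * D) * (2 * (1 / s)) = E / D * (1 / E) := by
      field_simp; linarith
    linear_combination -ψ 0 v * c1 + ψ 1 v * c2 - ψ (Fin.last (d + 1)) v * c3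
  · intro j hj1 hjd
    funext v
    rcases hcase j with rfl | rfl | rfl | ⟨k, hk, rfl⟩
    · simp at hj1
    · have c : -(s / E) + 2 * (D / E * (1 / (s * D))) = 0 := by
        field_simp; linarith
      rw [hprojc _ _ _ _ f1, c]
      simp
    · simp at hjd
    · rw [hproj _ (MvPolynomial.X o * MvPolynomial.X k)
        (fun w => by rw [pmul, pX, fj k hk, mul_assoc])]
      simp [mul_assoc, moment_X_mul_X, moment_X_mul_X_mul_X, moment_X_mul_X_mul_energyPoly,
        hk.symm]
  · have o00 : (D / (s * E)) * (D / (s * E)) + (1 / s) * (1 / s) +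
        2 * d * (1 / E * (1 / (s * D)) * (1 / E * (1 / (s * D)))) = 1 := by
      rw [← hD2]; field_simp; rw [hE2, hs2]; ring
    have o0l : (D / (s * E)) * (D / (s * E)) - (1 / s) * (1 / s) +
        2 * d * (1 / E * (1 / (s * D)) * (1 / E * (1 / (s * D)))) = 0 := by
      rw [← hD2]; field_simp; rw [hE2]; ring
    have o01 : (D / (s * E)) * -(s / E) +
        2 * d * (1 / E * (1 / (s * D)) * (D / E * (1 / (s * D)))) = 0 := by
      rw [← hD2]; field_simp; rw [hs2]; ring
    have o11 : (s / E) * (s / E) +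
        2 * d * (D / E * (1 / (s * D)) * (D / E * (1 / (s * D)))) = 1 := by
      rw [← hD2]; field_simp; rw [hE2, show s ^ 4 = (s ^ 2) ^ 2 by ring, hs2]; ring
    have key : ∀ (i j : Fin (d + 2)) (P Q : MvPolynomial (Fin d) ℝ),
        (∀ v, φ i v = polyFun P v * √(maxwellian d v)) →
        (∀ v, φ j v = polyFun Q v * √(maxwellian d v)) →
        ∫ v, φ i v * φ j v = moment d (P * Q) := by
      intro i j P Q hP hQ
      rw [← integral_polyFun_sqrt]
      simp only [hP, hQ]
    intro i j
    rcases hcase i with rfl | rfl | rfl | ⟨k, hk, rfl⟩ <;>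
    rcases hcase j with rfl | rfl | rfl | ⟨l, hl, rfl⟩
    · rw [key _ _ _ _ f0 f0, moment_combo_mul_combo, if_pos rfl]; linarith
    · rw [key _ _ _ _ f0 f1, moment_combo_mul_combo, if_neg n01]; linarith
    · rw [key _ _ _ _ f0 fl, moment_combo_mul_combo, if_neg n0l]; linarith
    · rw [key _ _ _ _ f0 (fj l hl), moment_combo_mul_X, if_neg (n0k l), if_neg hl.symm]
    · rw [key _ _ _ _ f1 f0, moment_combo_mul_combo, if_neg n01.symm]; linarith
    · rw [key _ _ _ _ f1 f1, moment_combo_mul_combo, if_pos rfl]; linarith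
    · rw [key _ _ _ _ f1 fl, moment_combo_mul_combo, if_neg n1l]; linarith
    · rw [key _ _ _ _ f1 (fj l hl), moment_combo_mul_X, if_neg (n1k l hl), if_neg hl.symm]
    · rw [key _ _ _ _ fl f0, moment_combo_mul_combo, if_neg n0l.symm]; linarith
    · rw [key _ _ _ _ fl f1, moment_combo_mul_combo, if_neg n1l.symm]; linarith
    · rw [key _ _ _ _ fl fl, moment_combo_mul_combo, if_pos rfl]; linarith
    · rw [key _ _ _ _ fl (fj l hl), moment_combo_mul_X, if_neg (nlk l), if_neg hl.symm]
    · rw [key _ _ _ _ (fj k hk) f0, mul_comm, moment_combo_mul_X, if_neg (n0k k).symm,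
        if_neg hk.symm]
    · rw [key _ _ _ _ (fj k hk) f1, mul_comm, moment_combo_mul_X, if_neg (n1k k hk).symm,
        if_neg hk.symm]
    · rw [key _ _ _ _ (fj k hk) fl, mul_comm, moment_combo_mul_X, if_neg (nlk k).symm,
        if_neg hk.symm]
    · rw [key _ _ _ _ (fj k hk) (fj l hl), moment_X_mul_X]
      simp
end

section
/- Let s ∈ (0, 1] and ε ∈ (0, 1). Then for every η ∈ ℝ^d one has |e^{−π·ε²·|η|²} − 1| ≤ ε^{s/2}·(1 + |η|²)^{s/2} + (1 − e^{−πε}). -/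
/-!
The left side is `1 - e^{-πε²|η|²}`, which lies in `[0, 1)`. If `ε (1 + |η|²) ≥ 1`, the power term
`(ε (1 + |η|²))^{s/2}` alone is at least `1`. Otherwise `ε |η|² ≤ 1`, so `ε² |η|² ≤ ε` and
monotonicity of the exponential bounds the left side by `1 - e^{-πε}`.
-/

/-- For `s ∈ (0,1]`, `ε ∈ (0,1)` and every `η ∈ ℝ^d`,
`|e^{−πε²|η|²} − 1| ≤ ε^{s/2}(1+|η|²)^{s/2} + (1 − e^{−πε})`. -/
theorem stmt_13 (d : ℕ) (s ε : ℝ) (hs : s ∈ Set.Ioc (0 : ℝ) 1)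
    (hε : ε ∈ Set.Ioo (0 : ℝ) 1) :
    ∀ η : EuclideanSpace ℝ (Fin d),
      |Real.exp (-(Real.pi * ε ^ 2 * ‖η‖ ^ 2)) - 1| ≤
        ε ^ (s / 2) * (1 + ‖η‖ ^ 2) ^ (s / 2) + (1 - Real.exp (-(Real.pi * ε))) := by
  intro η
  obtain ⟨hε0, -⟩ := hε
  have hexp_le : Real.exp (-(Real.pi * ε ^ 2 * ‖η‖ ^ 2)) ≤ 1 := by
    rw [Real.exp_le_one_iff, neg_nonpos]
    positivity
  have hgap : 0 ≤ 1 - Real.exp (-(Real.pi * ε)) := by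
    rw [sub_nonneg, Real.exp_le_one_iff, neg_nonpos]
    positivity
  rw [abs_sub_comm, abs_of_nonneg (sub_nonneg.mpr hexp_le),
    ← Real.mul_rpow hε0.le (by positivity)]
  -- Splitting on `ε (1 + |η|²)` rather than on `ε |η|²` makes the power term directly
  -- at least `1` in the high-frequency region.
  rcases le_total 1 (ε * (1 + ‖η‖ ^ 2)) with h | h
  · have hpow : 1 ≤ (ε * (1 + ‖η‖ ^ 2)) ^ (s / 2) :=
      Real.one_le_rpow h (half_pos hs.1).le
    linarith [Real.exp_pos (-(Real.pi * ε ^ 2 * ‖η‖ ^ 2))]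
  · have hpow : 0 ≤ (ε * (1 + ‖η‖ ^ 2)) ^ (s / 2) := by positivity
    have hsmall : ε ^ 2 * ‖η‖ ^ 2 ≤ ε := by nlinarith
    have hmono : Real.exp (-(Real.pi * ε)) ≤ Real.exp (-(Real.pi * ε ^ 2 * ‖η‖ ^ 2)) := by
      rw [Real.exp_le_exp, neg_le_neg_iff, mul_assoc]
      exact mul_le_mul_of_nonneg_left hsmall Real.pi_pos.le
    linarith
end

section
/- There is a constant C > 0 such that for all real numbers σ > 0, r > 0 and τ ∈ ℝ with τ ≠ 0, one has ∫_ℝ 1/(1 + (τ + 2π·u·r)²·(1 + u²)/σ²) du ≤ C·σ/|τ|. (One may take C = 4π.) -/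
/-!
Put `k = |τ| / (2σ)` and `a = τ / (2πr)`, so that `τ + 2πur = 2πr (u + a)`. Since
`|a| ≤ |u| + |u + a|`, at least one of `|u + a|`, `|u|` is at least `|a| / 2`. In the first case
`(τ + 2πur)² ≥ τ² / 4`, in the second `1 + u² ≥ a² / 4`; so
`(τ + 2πur)² (1 + u²) / σ²` is at least `(k u)²` or `(k (u + a))²` respectively. Hence the integrand
is at most the sum of the two Cauchy profiles `1 / (1 + (k u)²)` and `1 / (1 + (k (u + a))²)`,
each of which has integral `π / k = 2πσ / |τ|`, for a total of `4πσ / |τ|`.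
-/

open MeasureTheory

lemma integrable_cauchy_profile {k : ℝ} (hk : 0 < k) (a : ℝ) :
    Integrable (fun u : ℝ => (1 + (k * (u + a)) ^ 2)⁻¹) :=
  (integrable_inv_one_add_sq.comp_mul_left' hk.ne').comp_add_right a

lemma integral_cauchy_profile {k : ℝ} (hk : 0 < k) (a : ℝ) :
    ∫ u : ℝ, (1 + (k * (u + a)) ^ 2)⁻¹ = Real.pi / k := by
  rw [integral_add_right_eq_self (fun u : ℝ => (1 + (k * u) ^ 2)⁻¹) a,
    Measure.integral_comp_mul_left (fun u : ℝ => (1 + u ^ 2)⁻¹) k,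
    integral_univ_inv_one_add_sq, abs_of_pos (inv_pos.2 hk), smul_eq_mul]
  ring

/-- The pointwise bound behind the splitting of the domain, written with `τ = b * a`. -/
lemma cauchy_profile_le {σ a b k : ℝ} (hk : k ^ 2 = (b * a) ^ 2 / (4 * σ ^ 2)) (u : ℝ) :
    1 / (1 + (b * (u + a)) ^ 2 * (1 + u ^ 2) / σ ^ 2) ≤
      (1 + (k * (u + 0)) ^ 2)⁻¹ + (1 + (k * (u + a)) ^ 2)⁻¹ := by
  have key : ∀ x y : ℝ, (k * x) ^ 2 ≤ y → 1 / (1 + y) ≤ (1 + (k * x) ^ 2)⁻¹ := by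
    intro x y h
    rw [one_div]
    gcongr
  rcases le_or_gt (a ^ 2) (4 * (u + a) ^ 2) with h | h
  · have h1 : (k * (u + 0)) ^ 2 ≤ (b * (u + a)) ^ 2 * (1 + u ^ 2) / σ ^ 2 := by
      have e : (k * (u + 0)) ^ 2 = (b ^ 2 * (a ^ 2 / 4) * u ^ 2) / σ ^ 2 := by
        rw [mul_pow, hk]; ring
      rw [e, mul_pow]
      gcongr <;> linarith
    exact (key _ _ h1).trans (le_add_of_nonneg_right (by positivity))
  · have h' : a ^ 2 ≤ 4 * u ^ 2 := by
      -- Convexity of the square: `a² = ((u + a) - u)² ≤ 2 (u + a)² + 2 u²`.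
      nlinarith [sq_nonneg (u + a + u)]
    have h1 : (k * (u + a)) ^ 2 ≤ (b * (u + a)) ^ 2 * (1 + u ^ 2) / σ ^ 2 := by
      have e : (k * (u + a)) ^ 2 = ((b * (u + a)) ^ 2 * (a ^ 2 / 4)) / σ ^ 2 := by
        rw [mul_pow, hk]; ring
      rw [e]
      gcongr
      linarith
    exact (key _ _ h1).trans (le_add_of_nonneg_left (by positivity))

/-- There is a constant `C > 0` (one may take `C = 4π`) such that
for all `σ, r > 0` and `τ ≠ 0`,
`∫_ℝ du / (1 + (τ + 2πur)²(1+u²)/σ²) ≤ Cσ/|τ|`. -/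
theorem stmt_16 :
    ∃ C : ℝ, 0 < C ∧ ∀ (σ r τ : ℝ), 0 < σ → 0 < r → τ ≠ 0 →
      (∫ u : ℝ, 1 / (1 + (τ + 2 * Real.pi * u * r) ^ 2 * (1 + u ^ 2) / σ ^ 2)) ≤
        C * σ / |τ| := by
  refine ⟨4 * Real.pi, by positivity, fun σ r τ hσ hr hτ => ?_⟩
  have hτ' : 0 < |τ| := abs_pos.2 hτ
  have hpi := Real.pi_pos
  obtain ⟨a, ha⟩ : ∃ a, τ = 2 * Real.pi * r * a :=
    ⟨τ / (2 * Real.pi * r), by field_simp⟩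
  have hk : 0 < |τ| / (2 * σ) := by positivity
  have hk2 : (|τ| / (2 * σ)) ^ 2 = (2 * Real.pi * r * a) ^ 2 / (4 * σ ^ 2) := by
    rw [div_pow, sq_abs, ← ha]; ring
  have i0 := integrable_cauchy_profile hk 0
  have i1 := integrable_cauchy_profile hk a
  calc ∫ u : ℝ, 1 / (1 + (τ + 2 * Real.pi * u * r) ^ 2 * (1 + u ^ 2) / σ ^ 2)
      ≤ ∫ u : ℝ, ((1 + (|τ| / (2 * σ) * (u + 0)) ^ 2)⁻¹
          + (1 + (|τ| / (2 * σ) * (u + a)) ^ 2)⁻¹) := by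
        refine integral_mono_of_nonneg (.of_forall fun u => ?_) (i0.add i1) (.of_forall fun u => ?_)
        · show 0 ≤ _
          positivity
        · have e : τ + 2 * Real.pi * u * r = 2 * Real.pi * r * (u + a) := by rw [ha]; ring
          simp only [e]
          exact cauchy_profile_le hk2 u
    _ = 4 * Real.pi * σ / |τ| := by
        rw [integral_add i0 i1, integral_cauchy_profile hk, integral_cauchy_profile hk]
        field_simp
        ring
end
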